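/- For every K ∈ T^d, the union over k ∈ T^d of the spectra of the generalized Friedrichs models equals Σ_K: ∪_{k ∈ T^d} σ(h(K,k)) = Σ_K = [m_K, M_K] ∪ Λ_K. -/

import Mathlib

open MeasureTheory Complex Filter Topology Set

noncomputable section

instance fact2pi : Fact (0 < 2 * Real.pi) := ⟨by positivity⟩

/-- The d-dimensional torus `(-π, π]^d` with its Haar (Lebesgue) measure. -/
abbrev Td (d : ℕ) : Type := Fin d → AddCircle (2 * Real.pi)

/-- The Hilbert space `L²(T^d)`. -/
abbrev L2 (d : ℕ) := Lp ℂ 2 (volume : Measure (Td d))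

/-- The Hilbert space `L²((T^d)²)`. -/
abbrev L2two (d : ℕ) := Lp ℂ 2 (volume : Measure (Td d × Td d))

/-- The Hilbert space `ℂ ⊕ L²(T^d)`. -/
abbrev Hkk (d : ℕ) := WithLp 2 (ℂ × L2 d)

/-- The zero-particle component of an element of `ℂ ⊕ L²(T^d)`. -/
def pk1 {d : ℕ} (f : Hkk d) : ℂ := (WithLp.equiv 2 (ℂ × L2 d) f).1

/-- The one-particle component of an element of `ℂ ⊕ L²(T^d)`. -/
def pk2 {d : ℕ} (f : Hkk d) : L2 d := (WithLp.equiv 2 (ℂ × L2 d) f).2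

variable {d : ℕ}

/-- `E_min(K,k) = min_q w₂(K; k, q)`. -/
def Emin (w₂ : Td d → Td d → Td d → ℝ) (K k : Td d) : ℝ := ⨅ q, w₂ K k q

/-- `E_max(K,k) = max_q w₂(K; k, q)`. -/
def Emax (w₂ : Td d → Td d → Td d → ℝ) (K k : Td d) : ℝ := ⨆ q, w₂ K k q

/-- `m_K = min_{p,q} w₂(K; p, q)`. -/
def mK (w₂ : Td d → Td d → Td d → ℝ) (K : Td d) : ℝ := ⨅ x : Td d × Td d, w₂ K x.1 x.2

/-- `M_K = max_{p,q} w₂(K; p, q)`. -/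
def MK (w₂ : Td d → Td d → Td d → ℝ) (K : Td d) : ℝ := ⨆ x : Td d × Td d, w₂ K x.1 x.2

/-- The Fredholm determinant
`Δ_K(k; z) = w₁(K,k) − z − (1/2) ∫ v₁(t)² / (w₂(K;k,t) − z) dt`. -/
def Delta (v₁ : Td d → ℝ) (w₁ : Td d → Td d → ℝ) (w₂ : Td d → Td d → Td d → ℝ)
    (K k : Td d) (z : ℂ) : ℂ :=
  (w₁ K k : ℂ) - z - (1 / 2) * ∫ t, (v₁ t : ℂ) ^ 2 / ((w₂ K k t : ℂ) - z)

/-- The interval `[E_min(K,k), E_max(K,k)]`, viewed inside `ℂ`. -/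
def bandKk (w₂ : Td d → Td d → Td d → ℝ) (K k : Td d) : Set ℂ :=
  Complex.ofReal '' Set.Icc (Emin w₂ K k) (Emax w₂ K k)

/-- The interval `[m_K, M_K]`, viewed inside `ℂ`. -/
def bigBand (w₂ : Td d → Td d → Td d → ℝ) (K : Td d) : Set ℂ :=
  Complex.ofReal '' Set.Icc (mK w₂ K) (MK w₂ K)

/-- The two-particle branch
`Λ_K = {z : ∃ k, z ∉ [E_min(K,k), E_max(K,k)] ∧ Δ_K(k; z) = 0}`. -/
def LamK (v₁ : Td d → ℝ) (w₁ : Td d → Td d → ℝ) (w₂ : Td d → Td d → Td d → ℝ)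
    (K : Td d) : Set ℂ :=
  {z | ∃ k, z ∉ bandKk w₂ K k ∧ Delta v₁ w₁ w₂ K k z = 0}

/-- `Σ_K = [m_K, M_K] ∪ Λ_K`. -/
def SigK (v₁ : Td d → ℝ) (w₁ : Td d → Td d → ℝ) (w₂ : Td d → Td d → Td d → ℝ)
    (K : Td d) : Set ℂ :=
  bigBand w₂ K ∪ LamK v₁ w₁ w₂ K

/-- The defining equations of the generalized Friedrichs model `h(K, k)` acting on
`ℂ ⊕ L²(T^d)`:
`(h f)₀ = w₁(K,k) f₀ + (1/√2) ∫ v₁(s) f₁(s) ds` and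
`(h f)₁(q) = (1/√2) v₁(q) f₀ + w₂(K; k, q) f₁(q)` (the first off-diagonal entry is `h₀₁` and
the second is its adjoint `h₀₁*`). -/
def IsGenFriedrichs {d : ℕ} (v₁ : Td d → ℝ) (w₁ : Td d → Td d → ℝ)
    (w₂ : Td d → Td d → Td d → ℝ) (K k : Td d) (h : Hkk d →L[ℂ] Hkk d) : Prop :=
  ∀ f : Hkk d,
    (pk1 (h f) = (w₁ K k : ℂ) * pk1 f +
        (Real.sqrt 2 : ℂ)⁻¹ * (∫ s, (v₁ s : ℂ) * (pk2 f) s)) ∧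
    (⇑(pk2 (h f)) =ᵐ[volume] fun q =>
        (Real.sqrt 2 : ℂ)⁻¹ * (v₁ q : ℂ) * pk1 f + (w₂ K k q : ℂ) * (pk2 f) q)

/-!
Off the range of `w = w₂(K; k, ·)`, the `L²` component of `(h - z) f = g` can be solved for `f₁`,
and substituting it in the scalar component leaves an equation `Δ(z) f₀ = c` with `c` depending
only on `g`. Hence such a `z` lies in the spectrum exactly when `Δ(z) = 0`. On the other hand, every
value `z = w(q)` lies in the spectrum: the torus has no isolated points, so arbitrarily close to `q`
live two linearly independent functions, and some nonzero combination of them is killed by the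
linear functional that couples `L²` to `ℂ`; it is an approximate eigenvector. As the torus is
compact and connected, the range of `w` is the interval `[E_min(K,k), E_max(K,k)]`, and the union of
these intervals over `k` is `[m_K, M_K]`.
-/

section ApproximateEigenvector

variable {𝕜 E : Type*} [NontriviallyNormedField 𝕜] [NormedAddCommGroup E] [NormedSpace 𝕜 E]

theorem mem_spectrum_of_forall_exists_norm_sub_smul_le {T : E →L[𝕜] E} {z : 𝕜}
    (hT : ∀ ε > 0, ∃ f ≠ 0, ‖T f - z • f‖ ≤ ε * ‖f‖) : z ∈ spectrum 𝕜 T := by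
  rw [spectrum.mem_iff, IsUnit.sub_iff]
  rintro ⟨S, hS⟩
  set C : ℝ := ‖(↑S⁻¹ : E →L[𝕜] E)‖
  have le_mul_norm_sub (f : E) : ‖f‖ ≤ C * ‖T f - z • f‖ := by
    have hf : (↑S⁻¹ : E →L[𝕜] E) (T f - z • f) = f :=
      calc (↑S⁻¹ : E →L[𝕜] E) (T f - z • f)
          = (↑S⁻¹ * (T - algebraMap 𝕜 (E →L[𝕜] E) z)) f := rfl
        _ = f := by rw [← hS, S.inv_mul]; rfl
    simpa only [hf] using (↑S⁻¹ : E →L[𝕜] E).le_opNorm (T f - z • f)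
  have hC : 0 ≤ C := norm_nonneg _
  obtain ⟨f, hf, hTf⟩ := hT (C + 1)⁻¹ (by positivity)
  have : ‖f‖ < ‖f‖ :=
    calc ‖f‖ ≤ C * ((C + 1)⁻¹ * ‖f‖) :=
          (le_mul_norm_sub f).trans (mul_le_mul_of_nonneg_left hTf hC)
      _ = C / (C + 1) * ‖f‖ := by ring
      _ < 1 * ‖f‖ := mul_lt_mul_of_pos_right
          ((div_lt_one (by positivity)).2 (lt_add_one C)) (norm_pos_iff.2 hf)
      _ = ‖f‖ := one_mul _
  exact this.false

end ApproximateEigenvector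

theorem exists_smul_add_smul_ne_zero_map_eq_zero {R M : Type*} [CommRing R] [Nontrivial R]
    [AddCommGroup M] [Module R M] {x y : M} (hxy : LinearIndependent R ![x, y])
    (ℓ : M →ₗ[R] R) : ∃ a b : R, a • x + b • y ≠ 0 ∧ ℓ (a • x + b • y) = 0 := by
  rw [LinearIndependent.pair_iff] at hxy
  by_cases hx : ℓ x = 0
  · exact ⟨1, 0, fun h => one_ne_zero (hxy 1 0 h).1, by simp [hx]⟩
  · refine ⟨ℓ y, -ℓ x, fun h => hx (neg_eq_zero.1 (hxy _ _ h).2), ?_⟩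
    simp only [map_add, map_smul, smul_eq_mul]
    ring

section DisjointSupports

variable {X 𝕜 : Type*} [MeasurableSpace X] {μ : Measure X} [RCLike 𝕜] {A B : Set X}

theorem linearIndependent_indicatorConstLp_one_pair (hA : MeasurableSet A) (hB : MeasurableSet B)
    (hμA : μ A ≠ ⊤) (hμB : μ B ≠ ⊤) (hμA₀ : μ A ≠ 0) (hμB₀ : μ B ≠ 0) (hAB : Disjoint A B) :
    LinearIndependent 𝕜
      ![indicatorConstLp 2 hA hμA (1 : 𝕜), indicatorConstLp 2 hB hμB (1 : 𝕜)] := by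
  have ne_zero {S : Set X} (hS : MeasurableSet S) (hμS : μ S ≠ ⊤) (hμS₀ : μ S ≠ 0) :
      indicatorConstLp 2 hS hμS (1 : 𝕜) ≠ 0 := by
    rw [← norm_ne_zero_iff, norm_indicatorConstLp' two_ne_zero hμS₀, norm_one, one_mul]
    exact (Real.rpow_pos_of_pos (ENNReal.toReal_pos hμS₀ hμS) _).ne'
  have inner_eq_zero {S S' : Set X} (hS : MeasurableSet S) (hS' : MeasurableSet S')
      (hμS : μ S ≠ ⊤) (hμS' : μ S' ≠ ⊤) (hd : Disjoint S S') :
      inner 𝕜 (indicatorConstLp 2 hS hμS (1 : 𝕜)) (indicatorConstLp 2 hS' hμS' (1 : 𝕜)) = 0 := by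
    rw [L2.inner_indicatorConstLp_one_indicatorConstLp_one hS hS', hd.inter_eq]
    simp
  refine linearIndependent_of_ne_zero_of_inner_eq_zero (fun i => ?_) (fun i j hij => ?_)
  · fin_cases i
    exacts [ne_zero hA hμA hμA₀, ne_zero hB hμB hμB₀]
  · fin_cases i <;> fin_cases j
    exacts [(hij rfl).elim, inner_eq_zero hA hB hμA hμB hAB,
      inner_eq_zero hB hA hμB hμA hAB.symm, (hij rfl).elim]

theorem exists_L2_ne_zero_map_eq_zero_ae_eq_zero (hA : MeasurableSet A) (hB : MeasurableSet B)
    (hμA : μ A ≠ ⊤) (hμB : μ B ≠ ⊤) (hμA₀ : μ A ≠ 0) (hμB₀ : μ B ≠ 0) (hAB : Disjoint A B)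
    (ℓ : Lp 𝕜 2 μ →ₗ[𝕜] 𝕜) :
    ∃ g : Lp 𝕜 2 μ, g ≠ 0 ∧ ℓ g = 0 ∧ ∀ᵐ x ∂μ, x ∉ A ∪ B → g x = 0 := by
  set χA : Lp 𝕜 2 μ := indicatorConstLp 2 hA hμA 1
  set χB : Lp 𝕜 2 μ := indicatorConstLp 2 hB hμB 1
  obtain ⟨a, b, hne, hℓ⟩ := exists_smul_add_smul_ne_zero_map_eq_zero
    (linearIndependent_indicatorConstLp_one_pair hA hB hμA hμB hμA₀ hμB₀ hAB) ℓ
  refine ⟨a • χA + b • χB, hne, hℓ, ?_⟩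
  filter_upwards [Lp.coeFn_add (a • χA) (b • χB), Lp.coeFn_smul a χA, Lp.coeFn_smul b χB,
    indicatorConstLp_coeFn (hs := hA) (hμs := hμA) (c := (1 : 𝕜)) (p := 2),
    indicatorConstLp_coeFn (hs := hB) (hμs := hμB) (c := (1 : 𝕜)) (p := 2)]
    with x hadd haA hbB hχA hχB hx
  rw [mem_union, not_or] at hx
  rw [hadd, Pi.add_apply, haA, hbB, Pi.smul_apply, Pi.smul_apply, hχA, hχB,
    indicator_of_notMem hx.1, indicator_of_notMem hx.2, smul_zero, smul_zero, add_zero]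

end DisjointSupports

theorem exists_isOpen_disjoint_subset_of_mem_nhds {X : Type*} [TopologicalSpace X] [T2Space X]
    {x : X} [NeBot (𝓝[≠] x)] {U : Set X} (hU : U ∈ 𝓝 x) :
    ∃ A B : Set X, IsOpen A ∧ IsOpen B ∧ A.Nonempty ∧ B.Nonempty ∧ Disjoint A B ∧ A ∪ B ⊆ U := by
  obtain ⟨V, hVU, hV, hxV⟩ := mem_nhds_iff.1 hU
  obtain ⟨y, hyV, hyx⟩ : (V ∩ {x}ᶜ).Nonempty :=
    nonempty_of_mem (f := 𝓝[≠] x)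
      (inter_mem (mem_nhdsWithin_of_mem_nhds (hV.mem_nhds hxV)) self_mem_nhdsWithin)
  obtain ⟨A, B, hA, hB, hxA, hyB, hAB⟩ := t2_separation (Ne.symm hyx)
  exact ⟨A ∩ V, B ∩ V, hA.inter hV, hB.inter hV, ⟨x, hxA, hxV⟩, ⟨y, hyB, hyV⟩,
    hAB.mono inter_subset_left inter_subset_left,
    (union_subset inter_subset_right inter_subset_right).trans hVU⟩

section FriedrichsModel

variable {X : Type*} [MeasurableSpace X] {μ : Measure X} {a z : ℂ} {u v w : X → ℂ}
  {h : WithLp 2 (ℂ × Lp ℂ 2 μ) →L[ℂ] WithLp 2 (ℂ × Lp ℂ 2 μ)}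

/-- `h` is the block operator `(f₀, f₁) ↦ (a f₀ + ∫ u f₁, v f₀ + w f₁)` on `ℂ ⊕ L²(μ)`: a rank-two
coupling of the scalar `a` to the operator of multiplication by `w`. The coupling functions `u` and
`v` are kept independent, so that `h` need not be self-adjoint. -/
def IsFriedrichsModel (a : ℂ) (u v w : X → ℂ)
    (h : WithLp 2 (ℂ × Lp ℂ 2 μ) →L[ℂ] WithLp 2 (ℂ × Lp ℂ 2 μ)) : Prop :=
  ∀ f, (h f).fst = a * f.fst + ∫ x, u x * f.snd x ∂μ ∧
    (h f).snd =ᵐ[μ] fun x => v x * f.fst + w x * f.snd x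

/-- The Fredholm determinant of `h - z` for the block operator `h` of `IsFriedrichsModel`: the
Schur complement of its entry `w - z`. -/
def friedrichsDet (μ : Measure X) (a : ℂ) (u v w : X → ℂ) (z : ℂ) : ℂ :=
  a - z - ∫ x, u x * v x / (w x - z) ∂μ

namespace IsFriedrichsModel

theorem memLp_coupling (hh : IsFriedrichsModel a u v w h) : MemLp v 2 μ := by
  refine (Lp.memLp (h (WithLp.toLp 2 (1, 0))).snd).ae_eq ?_
  filter_upwards [(hh (WithLp.toLp 2 (1, 0))).2, Lp.coeFn_zero ℂ 2 μ] with x hx h0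
  rw [hx, WithLp.toLp_fst, WithLp.toLp_snd, h0, Pi.zero_apply, mul_zero, add_zero, mul_one]

theorem sub_algebraMap_apply_snd_ae_eq (hh : IsFriedrichsModel a u v w h)
    (f : WithLp 2 (ℂ × Lp ℂ 2 μ)) :
    ((h - algebraMap ℂ _ z) f).snd =ᵐ[μ] fun x => v x * f.fst + (w x - z) * f.snd x := by
  filter_upwards [Lp.coeFn_sub (h f).snd (z • f.snd), Lp.coeFn_smul z f.snd, (hh f).2]
    with x hsub hsmul hx
  calc ((h - algebraMap ℂ _ z) f).snd x = ((h f).snd - z • f.snd : Lp ℂ 2 μ) x := rfl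
    _ = v x * f.fst + (w x - z) * f.snd x := by
      rw [hsub, Pi.sub_apply, hsmul, hx, Pi.smul_apply, smul_eq_mul]
      ring

theorem sub_algebraMap_apply_snd_eq_iff (hh : IsFriedrichsModel a u v w h)
    (hz : ∀ᵐ x ∂μ, w x ≠ z) {f : WithLp 2 (ℂ × Lp ℂ 2 μ)} {g : Lp ℂ 2 μ} :
    ((h - algebraMap ℂ _ z) f).snd = g ↔
      f.snd =ᵐ[μ] fun x => (w x - z)⁻¹ * (g x - v x * f.fst) := by
  rw [Lp.ext_iff]
  have solve : ∀ᵐ x ∂μ, ((h - algebraMap ℂ _ z) f).snd x = g x ↔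
      f.snd x = (w x - z)⁻¹ * (g x - v x * f.fst) := by
    filter_upwards [hh.sub_algebraMap_apply_snd_ae_eq f, hz] with x hx hxz
    rw [hx, eq_inv_mul_iff_mul_eq₀ (sub_ne_zero.2 hxz), eq_sub_iff_add_eq']
  exact eventually_congr solve

theorem sub_algebraMap_apply_fst_eq (hh : IsFriedrichsModel a u v w h) (hu : MemLp u 2 μ)
    (hr : MemLp (fun x => (w x - z)⁻¹) ⊤ μ) {f : WithLp 2 (ℂ × Lp ℂ 2 μ)} {g : Lp ℂ 2 μ}
    (hf : f.snd =ᵐ[μ] fun x => (w x - z)⁻¹ * (g x - v x * f.fst)) :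
    ((h - algebraMap ℂ _ z) f).fst =
      friedrichsDet μ a u v w z * f.fst + ∫ x, u x * ((w x - z)⁻¹ * g x) ∂μ := by
  have hrg : MemLp (fun x => (w x - z)⁻¹ * g x) 2 μ := (Lp.memLp g).mul hr
  have hrv : MemLp (fun x => (w x - z)⁻¹ * v x) 2 μ := hh.memLp_coupling.mul hr
  have hug : Integrable (fun x => u x * ((w x - z)⁻¹ * g x)) μ :=
    hu.integrable_mul hrg
  have huv : Integrable (fun x => u x * ((w x - z)⁻¹ * v x)) μ :=
    hu.integrable_mul hrv
  have hint : ∫ x, u x * f.snd x ∂μ = (∫ x, u x * ((w x - z)⁻¹ * g x) ∂μ) -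
      (∫ x, u x * v x / (w x - z) ∂μ) * f.fst :=
    calc ∫ x, u x * f.snd x ∂μ
        = ∫ x, u x * ((w x - z)⁻¹ * g x) - u x * ((w x - z)⁻¹ * v x) * f.fst ∂μ :=
          integral_congr_ae (hf.mono fun x hx => by simp only [hx]; ring)
      _ = (∫ x, u x * ((w x - z)⁻¹ * g x) ∂μ) -
            (∫ x, u x * ((w x - z)⁻¹ * v x) ∂μ) * f.fst := by
          rw [integral_sub hug (huv.mul_const _), integral_mul_const]
      _ = _ := by simp only [div_eq_mul_inv, mul_assoc, mul_comm (v _)]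
  calc ((h - algebraMap ℂ _ z) f).fst = (h f).fst - z * f.fst := rfl
    _ = _ := by rw [(hh f).1, hint, friedrichsDet]; ring

theorem sub_algebraMap_apply_eq_iff (hh : IsFriedrichsModel a u v w h) (hu : MemLp u 2 μ)
    (hr : MemLp (fun x => (w x - z)⁻¹) ⊤ μ) (hz : ∀ᵐ x ∂μ, w x ≠ z)
    {f g : WithLp 2 (ℂ × Lp ℂ 2 μ)} :
    (h - algebraMap ℂ _ z) f = g ↔
      friedrichsDet μ a u v w z * f.fst = g.fst - ∫ x, u x * ((w x - z)⁻¹ * g.snd x) ∂μ ∧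
      f.snd =ᵐ[μ] fun x => (w x - z)⁻¹ * (g.snd x - v x * f.fst) := by
  rw [← (WithLp.ofLp_injective 2).eq_iff, Prod.ext_iff, WithLp.ofLp_snd, WithLp.ofLp_snd,
    hh.sub_algebraMap_apply_snd_eq_iff hz]
  refine and_congr_left fun hf => ?_
  rw [WithLp.ofLp_fst, WithLp.ofLp_fst, hh.sub_algebraMap_apply_fst_eq hu hr hf,
    eq_sub_iff_add_eq]

theorem bijective_sub_algebraMap_of_friedrichsDet_ne_zero (hh : IsFriedrichsModel a u v w h)
    (hu : MemLp u 2 μ) (hr : MemLp (fun x => (w x - z)⁻¹) ⊤ μ) (hz : ∀ᵐ x ∂μ, w x ≠ z)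
    (hΔ : friedrichsDet μ a u v w z ≠ 0) :
    Function.Bijective
      (h - algebraMap ℂ (WithLp 2 (ℂ × Lp ℂ 2 μ) →L[ℂ] WithLp 2 (ℂ × Lp ℂ 2 μ)) z) := by
  have mem_snd (g : WithLp 2 (ℂ × Lp ℂ 2 μ)) (c : ℂ) :
      MemLp (fun x => (w x - z)⁻¹ * (g.snd x - v x * c)) 2 μ :=
    ((Lp.memLp g.snd).sub (hh.memLp_coupling.mul_const c)).mul hr
  refine (Function.bijective_iff_existsUnique _).2 fun g => ?_
  set c : ℂ := (g.fst - ∫ x, u x * ((w x - z)⁻¹ * g.snd x) ∂μ) / friedrichsDet μ a u v w z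
  refine ⟨WithLp.toLp 2 (c, (mem_snd g c).toLp _), ?_, fun f hf => ?_⟩
  · exact (hh.sub_algebraMap_apply_eq_iff hu hr hz).2
      ⟨mul_div_cancel₀ _ hΔ, (mem_snd g c).coeFn_toLp⟩
  · obtain ⟨hfst, hsnd⟩ := (hh.sub_algebraMap_apply_eq_iff hu hr hz).1 hf
    have hc : f.fst = c := eq_div_of_mul_eq hΔ (by rw [mul_comm, hfst])
    rw [hc] at hsnd
    exact WithLp.ofLp_injective 2
      (Prod.ext hc (Lp.ext (hsnd.trans (mem_snd g c).coeFn_toLp.symm)))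

theorem mem_spectrum_iff_friedrichsDet_eq_zero (hh : IsFriedrichsModel a u v w h)
    (hu : MemLp u 2 μ) (hr : MemLp (fun x => (w x - z)⁻¹) ⊤ μ) (hz : ∀ᵐ x ∂μ, w x ≠ z) :
    z ∈ spectrum ℂ h ↔ friedrichsDet μ a u v w z = 0 := by
  rw [spectrum.mem_iff, IsUnit.sub_iff, ContinuousLinearMap.isUnit_iff_bijective]
  refine ⟨not_imp_comm.1 (hh.bijective_sub_algebraMap_of_friedrichsDet_ne_zero hu hr hz), ?_⟩
  rintro hΔ ⟨-, hsurj⟩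
  obtain ⟨f, hf⟩ := hsurj (WithLp.toLp 2 (1, 0))
  have hint : ∫ x, u x * ((w x - z)⁻¹ * (0 : Lp ℂ 2 μ) x) ∂μ = 0 :=
    integral_eq_zero_of_ae ((Lp.coeFn_zero ℂ 2 μ).mono fun x hx => by
      simp only [hx, Pi.zero_apply, mul_zero])
  have : (0 : ℂ) = 1 :=
    calc (0 : ℂ) = friedrichsDet μ a u v w z * f.fst := by rw [hΔ, zero_mul]
      _ = 1 - ∫ x, u x * ((w x - z)⁻¹ * (0 : Lp ℂ 2 μ) x) ∂μ :=
        ((hh.sub_algebraMap_apply_eq_iff hu hr hz).1 hf).1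
      _ = 1 := by rw [hint, sub_zero]
  exact zero_ne_one this

theorem norm_apply_sub_smul_le {ε : ℝ} {g : Lp ℂ 2 μ} (hh : IsFriedrichsModel a u v w h)
    (hg : (h (WithLp.toLp 2 (0, g))).fst = 0) (hε : ∀ᵐ x ∂μ, g x = 0 ∨ ‖w x - z‖ ≤ ε) :
    ‖h (WithLp.toLp 2 (0, g)) - z • WithLp.toLp 2 (0, g)‖ ≤
      ε * ‖(WithLp.toLp 2 (0, g) : WithLp 2 (ℂ × Lp ℂ 2 μ))‖ := by
  set f : WithLp 2 (ℂ × Lp ℂ 2 μ) := WithLp.toLp 2 (0, g)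
  have hsnd : ‖((h - algebraMap ℂ _ z) f).snd‖ ≤ ε * ‖g‖ := by
    refine Lp.norm_le_mul_norm_of_ae_le_mul ?_
    filter_upwards [hh.sub_algebraMap_apply_snd_ae_eq (z := z) f, hε] with x hx hxε
    have hfx : ((h - algebraMap ℂ _ z) f).snd x = (w x - z) * g x :=
      hx.trans (by rw [WithLp.toLp_fst, WithLp.toLp_snd, mul_zero, zero_add])
    rw [hfx, norm_mul]
    rcases hxε with h0 | hle
    · simp [h0]
    · exact mul_le_mul_of_nonneg_right hle (norm_nonneg _)
  have hf : h f - z • f = WithLp.toLp 2 (0, ((h - algebraMap ℂ _ z) f).snd) :=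
    WithLp.ofLp_injective 2 (Prod.ext (by simp [hg, f]) rfl)
  rw [hf, WithLp.norm_toLp_snd, WithLp.norm_toLp_snd]
  exact hsnd

theorem mem_spectrum_of_forall_exists_disjoint (hh : IsFriedrichsModel a u v w h)
    (hz : ∀ ε > 0, ∃ A B : Set X, MeasurableSet A ∧ MeasurableSet B ∧ μ A ≠ ⊤ ∧ μ B ≠ ⊤ ∧
      μ A ≠ 0 ∧ μ B ≠ 0 ∧ Disjoint A B ∧ ∀ x ∈ A ∪ B, ‖w x - z‖ ≤ ε) :
    z ∈ spectrum ℂ h := by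
  refine mem_spectrum_of_forall_exists_norm_sub_smul_le fun ε hε => ?_
  obtain ⟨A, B, hA, hB, hμA, hμB, hμA₀, hμB₀, hAB, hw⟩ := hz ε hε
  let ℓ : Lp ℂ 2 μ →ₗ[ℂ] ℂ :=
    { toFun g := (h (WithLp.toLp 2 (0, g))).fst
      map_add' g g' := by
        rw [← WithLp.add_fst, ← map_add, ← WithLp.toLp_add, Prod.mk_add_mk, add_zero]
      map_smul' c g := by
        rw [RingHom.id_apply, ← WithLp.smul_fst, ← map_smul, ← WithLp.toLp_smul, Prod.smul_mk,
          smul_zero] }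
  obtain ⟨g, hg, hℓg, hsupp⟩ :=
    exists_L2_ne_zero_map_eq_zero_ae_eq_zero hA hB hμA hμB hμA₀ hμB₀ hAB ℓ
  refine ⟨WithLp.toLp 2 (0, g), fun h0 => hg (congrArg WithLp.snd h0), ?_⟩
  refine hh.norm_apply_sub_smul_le hℓg (hsupp.mono fun x hx => ?_)
  exact (em (x ∈ A ∪ B)).symm.imp hx (hw x)

variable [TopologicalSpace X] [OpensMeasurableSpace X] [T2Space X]
  [μ.IsOpenPosMeasure] [IsLocallyFiniteMeasure μ]

theorem apply_mem_spectrum (hh : IsFriedrichsModel a u v w h) {x : X} [NeBot (𝓝[≠] x)]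
    (hw : ContinuousAt w x) : w x ∈ spectrum ℂ h := by
  refine hh.mem_spectrum_of_forall_exists_disjoint fun ε hε => ?_
  obtain ⟨V, hV, hμV⟩ := μ.finiteAt_nhds x
  obtain ⟨A, B, hA, hB, hA₀, hB₀, hAB, hsub⟩ := exists_isOpen_disjoint_subset_of_mem_nhds
    (inter_mem hV (hw.preimage_mem_nhds (Metric.closedBall_mem_nhds (w x) hε)))
  have hμ {S : Set X} (hS : S ⊆ A ∪ B) : μ S ≠ ⊤ :=
    measure_ne_top_of_subset ((hS.trans hsub).trans inter_subset_left) hμV.ne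
  exact ⟨A, B, hA.measurableSet, hB.measurableSet, hμ subset_union_left, hμ subset_union_right,
    hA.measure_ne_zero μ hA₀, hB.measure_ne_zero μ hB₀, hAB,
    fun y hy => mem_closedBall_iff_norm.1 (hsub hy).2⟩

theorem spectrum_eq [CompactSpace X] [PerfectSpace X] (hh : IsFriedrichsModel a u v w h)
    (hu : MemLp u 2 μ) (hw : Continuous w) :
    spectrum ℂ h = range w ∪ {z | z ∉ range w ∧ friedrichsDet μ a u v w z = 0} := by
  ext z
  by_cases hz : z ∈ range w
  · obtain ⟨x, rfl⟩ := hz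
    exact iff_of_true (hh.apply_mem_spectrum hw.continuousAt) (Or.inl (mem_range_self x))
  · have hwz (x : X) : w x ≠ z := fun hx => hz ⟨x, hx⟩
    have hr : MemLp (fun x => (w x - z)⁻¹) ⊤ μ :=
      ((hw.sub continuous_const).inv₀ fun x => sub_ne_zero.2 (hwz x)).memLp_top_of_hasCompactSupport
        (HasCompactSupport.of_compactSpace _) μ
    rw [hh.mem_spectrum_iff_friedrichsDet_eq_zero hu hr (ae_of_all _ hwz), mem_union]
    exact ⟨fun hΔ => Or.inr ⟨hz, hΔ⟩, fun h => (h.resolve_left hz).2⟩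

end IsFriedrichsModel

end FriedrichsModel

theorem range_eq_Icc_iInf_iSup {X α : Type*} [TopologicalSpace X] [CompactSpace X]
    [ConnectedSpace X] [ConditionallyCompleteLinearOrder α] [TopologicalSpace α] [OrderTopology α]
    {f : X → α} (hf : Continuous f) : range f = Icc (⨅ x, f x) (⨆ x, f x) :=
  eq_Icc_of_connected_compact (isConnected_range hf) (isCompact_range hf)

theorem nontrivial_addCircle {𝕜 : Type*} [Field 𝕜] [LinearOrder 𝕜] [IsStrictOrderedRing 𝕜]
    [Archimedean 𝕜] (p : 𝕜) [hp : Fact (0 < p)] : Nontrivial (AddCircle p) :=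
  have : Nontrivial (Ico 0 (0 + p)) :=
    nontrivial_coe_sort.2 (Ico_infinite (lt_add_of_pos_right 0 hp.out)).nontrivial
  (AddCircle.equivIco p 0).nontrivial

section Torus

variable {v₁ : Td d → ℝ} {w₁ : Td d → Td d → ℝ} {w₂ : Td d → Td d → Td d → ℝ} {K k : Td d}

theorem bandKk_eq_range (hw : Continuous (w₂ K k)) :
    bandKk w₂ K k = range fun q => (w₂ K k q : ℂ) := by
  rw [bandKk, Emin, Emax, ← range_eq_Icc_iInf_iSup hw, ← range_comp']

theorem bigBand_eq_iUnion_bandKk (hw : Continuous fun x : Td d × Td d => w₂ K x.1 x.2) :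
    bigBand w₂ K = ⋃ k, bandKk w₂ K k := by
  have hwk (k : Td d) : Continuous (w₂ K k) := hw.comp (Continuous.prodMk_right k)
  simp only [bandKk_eq_range (hwk _), bigBand, mK, MK, ← range_eq_Icc_iInf_iSup hw]
  ext z
  simp

theorem friedrichsDet_eq_Delta (v₁ : Td d → ℝ) (w₁ : Td d → Td d → ℝ)
    (w₂ : Td d → Td d → Td d → ℝ) (K k : Td d) (z : ℂ) :
    friedrichsDet volume (w₁ K k) (fun q => (Real.sqrt 2 : ℂ)⁻¹ * v₁ q)
      (fun q => (Real.sqrt 2 : ℂ)⁻¹ * v₁ q) (fun q => w₂ K k q) z = Delta v₁ w₁ w₂ K k z := by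
  have hsqrt : (Real.sqrt 2 : ℂ)⁻¹ * (Real.sqrt 2 : ℂ)⁻¹ = 1 / 2 := by
    rw [← mul_inv, ← ofReal_mul, Real.mul_self_sqrt zero_le_two, one_div, ofReal_ofNat]
  have integrand_eq (q : Td d) :
      (Real.sqrt 2 : ℂ)⁻¹ * v₁ q * ((Real.sqrt 2 : ℂ)⁻¹ * v₁ q) / (w₂ K k q - z) =
        1 / 2 * ((v₁ q : ℂ) ^ 2 / (w₂ K k q - z)) := by
    linear_combination ((v₁ q : ℂ) ^ 2 / (w₂ K k q - z)) * hsqrt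
  simp only [friedrichsDet, Delta, integrand_eq, integral_const_mul]

namespace IsGenFriedrichs

variable {h : Hkk d →L[ℂ] Hkk d}

theorem isFriedrichsModel (hh : IsGenFriedrichs v₁ w₁ w₂ K k h) :
    IsFriedrichsModel (μ := volume) (w₁ K k) (fun q => (Real.sqrt 2 : ℂ)⁻¹ * v₁ q)
      (fun q => (Real.sqrt 2 : ℂ)⁻¹ * v₁ q) (fun q => w₂ K k q) h := by
  refine fun f => ⟨?_, (hh f).2⟩
  simp only [mul_assoc, integral_const_mul]
  exact (hh f).1

theorem spectrum_eq (hd : 1 ≤ d) (hh : IsGenFriedrichs v₁ w₁ w₂ K k h)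
    (hw : Continuous (w₂ K k)) :
    spectrum ℂ h = bandKk w₂ K k ∪ {z | z ∉ bandKk w₂ K k ∧ Delta v₁ w₁ w₂ K k z = 0} := by
  have : Nonempty (Fin d) := ⟨⟨0, hd⟩⟩
  have : Nontrivial (AddCircle (2 * Real.pi)) := nontrivial_addCircle _
  simpa only [bandKk_eq_range hw, friedrichsDet_eq_Delta] using
    hh.isFriedrichsModel.spectrum_eq hh.isFriedrichsModel.memLp_coupling
      (continuous_ofReal.comp hw)

end IsGenFriedrichs

end Torus

theorem iUnion_spectrum_genFriedrichs_general (hd : 1 ≤ d) {v₁ : Td d → ℝ}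
    {w₁ : Td d → Td d → ℝ} {w₂ : Td d → Td d → Td d → ℝ} {K : Td d}
    (hw₂ : Continuous fun x : Td d × Td d => w₂ K x.1 x.2) {h : Td d → Hkk d →L[ℂ] Hkk d}
    (hh : ∀ k, IsGenFriedrichs v₁ w₁ w₂ K k (h k)) :
    (⋃ k, spectrum ℂ (h k)) = SigK v₁ w₁ w₂ K := by
  have hw (k : Td d) : Continuous (w₂ K k) := hw₂.comp (Continuous.prodMk_right k)
  calc (⋃ k, spectrum ℂ (h k))
      = ⋃ k, (bandKk w₂ K k ∪ {z | z ∉ bandKk w₂ K k ∧ Delta v₁ w₁ w₂ K k z = 0}) :=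
        iUnion_congr fun k => (hh k).spectrum_eq hd (hw k)
    _ = (⋃ k, bandKk w₂ K k) ∪
          ⋃ k, {z | z ∉ bandKk w₂ K k ∧ Delta v₁ w₁ w₂ K k z = 0} := iUnion_union_distrib _ _
    _ = SigK v₁ w₁ w₂ K := by
        rw [SigK, LamK, bigBand_eq_iUnion_bandKk hw₂, ofPred_exists]

/-- For every `K ∈ T^d`, the union over `k ∈ T^d` of the spectra of the
generalized Friedrichs models equals `Σ_K = [m_K, M_K] ∪ Λ_K`. -/
theorem iUnion_spectrum_genFriedrichs
    (d : ℕ) (hd : 1 ≤ d)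
    (w₀ v₀ v₁ : Td d → ℝ) (w₁ : Td d → Td d → ℝ) (w₂ : Td d → Td d → Td d → ℝ)
    (hw₀ : Continuous w₀) (hv₀ : Continuous v₀) (hv₁ : Continuous v₁)
    (hw₁ : Continuous fun x : Td d × Td d => w₁ x.1 x.2)
    (hw₂ : Continuous fun x : Td d × Td d × Td d => w₂ x.1 x.2.1 x.2.2)
    (hsym : ∀ K p q : Td d, w₂ K p q = w₂ K q p)
    (K : Td d) (h : Td d → Hkk d →L[ℂ] Hkk d)
    (hh : ∀ k : Td d, IsGenFriedrichs v₁ w₁ w₂ K k (h k)) :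
    (⋃ k : Td d, spectrum ℂ (h k)) = SigK v₁ w₁ w₂ K := by
  exact iUnion_spectrum_genFriedrichs_general hd
    (hw₂.comp (by fun_prop : Continuous fun x : Td d × Td d => (K, x.1, x.2))) hh
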